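/- arXiv:1402.6390 — 3 statements merged into one kernel-verified Lean document; each statement's English description precedes it below -/
import Mathlib

section
/- Let F : B^n → ℂ be a complex-valued function on the open unit ball B^n of ℂ^n. Suppose (i) for every positive integer k there exists an open neighborhood U_k of the origin such that F is of class C^k on U_k, and (ii) for every v ∈ ℂ^n with ‖v‖ = 1 the function ζ ↦ F(ζ·v), defined on the open unit disc in ℂ, is holomorphic in ζ. Then F is holomorphic on B^n. -/
open Metric

theorem fo_slice {E : Type*} [NormedAddCommGroup E] [NormedSpace ℂ E] (F : E → ℂ)
    (hslice : ∀ v : E, ‖v‖ = 1 →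
      DifferentiableOn ℂ (fun ζ : ℂ => F (ζ • v)) (ball (0 : ℂ) 1)) (v : E) (R : ℝ)
    (hR : R * ‖v‖ ≤ 1) : DifferentiableOn ℂ (fun ζ : ℂ => F (ζ • v)) (ball (0 : ℂ) R) := by
  by_cases hv : v = 0
  · subst hv; simp
  have hv0 : 0 < ‖v‖ := norm_pos_iff.2 hv
  have h1 := hslice (((‖v‖ : ℂ)⁻¹) • v) (by
    rw [norm_smul, norm_inv, Complex.norm_real, norm_norm, inv_mul_cancel₀ hv0.ne'])
  have h2 : DifferentiableOn ℂ (fun ζ : ℂ => ζ * (‖v‖ : ℂ)) (ball (0 : ℂ) R) := by fun_prop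
  have h3 := h1.comp h2 (fun ζ hζ => by
    simp only [mem_ball, dist_zero_right, norm_mul, Complex.norm_real, norm_norm] at hζ ⊢
    exact lt_of_lt_of_le (mul_lt_mul_of_pos_right hζ hv0) hR)
  refine h3.congr (fun ζ _ => ?_)
  have : (‖v‖ : ℂ) ≠ 0 := by exact_mod_cast hv0.ne'
  simp [smul_smul, this]

theorem fo_taylor {E : Type*} [NormedAddCommGroup E] [NormedSpace ℂ E] [NormedSpace ℝ E]
    [IsScalarTower ℝ ℂ E] (F : E → ℂ) (k : ℕ) (U : Set E) (hU : IsOpen U) (h0 : (0 : E) ∈ U)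
    (hF : ContDiffOn ℝ k F U) (v : E) (R : ℝ) (hR : 0 < R)
    (hd : DifferentiableOn ℂ (fun ζ : ℂ => F (ζ • v)) (ball (0 : ℂ) R)) (ζ : ℂ) :
    iteratedFDeriv ℝ k F 0 (fun _ => ζ • v) =
      ζ ^ k * iteratedDeriv k (fun ζ : ℂ => F (ζ • v)) 0 := by
  let g : ℂ →L[ℝ] E := (ContinuousLinearMap.toSpanSingleton ℂ v).restrictScalars ℝ
  have hg : ∀ z, g z = z • v := fun z => rfl
  have hg0 : g 0 = 0 := map_zero g
  have hpre : IsOpen (g ⁻¹' U) := hU.preimage g.continuous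
  have h0' : (0 : ℂ) ∈ g ⁻¹' U := by simpa [hg0] using h0
  have h1 := g.iteratedFDerivWithin_comp_right hF hU.uniqueDiffOn hpre.uniqueDiffOn
    (x := 0) (by simpa [hg0] using h0) (le_refl (k : WithTop ℕ∞))
  rw [iteratedFDerivWithin_of_isOpen k hpre h0', hg0, iteratedFDerivWithin_of_isOpen k hU h0] at h1
  have han : ContDiffAt ℂ k (F ∘ g) 0 :=
    (hd.contDiffOn isOpen_ball).contDiffAt (ball_mem_nhds _ hR)
  have h2 := han.restrictScalars_iteratedFDeriv (𝕜 := ℝ)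
  rw [h1] at h2
  have h3 := congrArg (fun f => f (fun _ => ζ)) h2
  simp only [Function.comp_apply, ContinuousMultilinearMap.coe_restrictScalars,
    ContinuousMultilinearMap.compContinuousLinearMap_apply, hg] at h3
  rw [← h3, iteratedDeriv_eq_iteratedFDeriv]
  have := (iteratedFDeriv ℂ k (F ∘ g) 0).map_smul_univ (fun _ => ζ) (fun _ => 1)
  have h5 : (fun ζ : ℂ => F (ζ • v)) = F ∘ g := rfl
  rw [h5]
  simpa using this

theorem fo_poly {M : Type*} [AddCommGroup M] [Module ℝ M] [TopologicalSpace M] {k : ℕ}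
    (f : ContinuousMultilinearMap ℝ (fun _ : Fin k => M) ℂ) (x y : Fin k → M) :
    ∃ q : Polynomial ℂ, ∀ t : ℝ, f (x + t • y) = q.eval (t : ℂ) := by
  classical
  refine ⟨∑ s : Finset (Fin k), Polynomial.C (f (s.piecewise x y)) * Polynomial.X ^ (sᶜ.card),
    fun t => ?_⟩
  rw [f.map_add_univ, Polynomial.eval_finsetSum]
  refine Finset.sum_congr rfl fun s _ => ?_
  have : s.piecewise x (t • y) = sᶜ.piecewise (fun i => t • (s.piecewise x y) i)
      (s.piecewise x y) := by
    ext i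
    by_cases hi : i ∈ s <;> simp [hi]
  rw [this]
  have h2 := f.map_piecewise_smul (fun _ => t) (s.piecewise x y) sᶜ
  rw [h2, Finset.prod_const, Complex.real_smul, Polynomial.eval_mul, Polynomial.eval_C,
    Polynomial.eval_pow, Polynomial.eval_X, Complex.ofReal_pow]
  exact mul_comm _ _

theorem fo_hol {E : Type*} [NormedAddCommGroup E] [NormedSpace ℂ E] [NormedSpace ℝ E]
    [IsScalarTower ℝ ℂ E] (k : ℕ) (P : ContinuousMultilinearMap ℝ (fun _ : Fin k => E) ℂ)
    (hP : ∀ (ζ : ℂ) (v : E), P (fun _ => ζ • v) = ζ ^ k * P (fun _ => v)) :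
    Differentiable ℂ (fun v : E => P (fun _ => v)) := by
  classical
  let dg : E →L[ℝ] (Fin k → E) := ContinuousLinearMap.pi (fun _ => ContinuousLinearMap.id ℝ E)
  let L : E → (E →L[ℝ] ℂ) := fun v => (P.linearDeriv (fun _ => v)).comp dg
  have hL : ∀ v, HasFDerivAt (fun v : E => P (fun _ => v)) (L v) v := fun v =>
    (P.hasFDerivAt (fun _ => v)).comp v dg.hasFDerivAt
  have hLa : ∀ v h, L v h = ∑ i, P (Function.update (fun _ => v) i h) := by
    intro v h
    simp [L, dg, ContinuousMultilinearMap.linearDeriv_apply]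
  have hhom : ∀ (ζ : ℂ) (v h : E), L (ζ • v) (ζ • h) = ζ ^ k * L v h := by
    intro ζ v h
    let m : E →L[ℝ] E := (ζ • ContinuousLinearMap.id ℂ E).restrictScalars ℝ
    have hm : ∀ z, m z = ζ • z := fun z => rfl
    have h1 : HasFDerivAt (fun v : E => P (fun _ => ζ • v)) ((L (ζ • v)).comp m) v :=
      HasFDerivAt.comp (f := m) v (hL (ζ • v)) m.hasFDerivAt
    simp only [hP] at h1
    have h2 := (hL v).const_mul (ζ ^ k)
    have := congrArg (fun f => f h) (h1.unique h2)
    simpa [hm] using this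
  have hq : ∀ v h w : E, ∃ q : Polynomial ℂ, ∀ t : ℝ, L (v + t • w) h = q.eval (t : ℂ) := by
    intro v h w
    have := fun i => fo_poly P (Function.update (fun _ => v) i h)
      (Function.update (fun _ => w) i 0)
    choose q hq using this
    refine ⟨∑ i, q i, fun t => ?_⟩
    rw [hLa, Polynomial.eval_finsetSum]
    refine Finset.sum_congr rfl fun i _ => ?_
    rw [← hq]
    congr 1
    ext j
    by_cases hj : j = i
    · subst hj; simp
    · simp [hj]
  have hI : ∀ v h : E, L v (Complex.I • h) = Complex.I * L v h := by
    intro v h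
    obtain ⟨q1, hq1⟩ := hq v h (Complex.I • v)
    obtain ⟨q2, hq2⟩ := hq v (Complex.I • h) (Complex.I • v)
    set b : ℂ := L v h + Complex.I * L v (Complex.I • h) with hb
    have key : ∀ t : ℝ, (1 - Complex.I * t) * (q1.eval (t : ℂ) + Complex.I * q2.eval (t : ℂ)) =
        (1 + Complex.I * t) ^ k * b := by
      intro t
      have e : ∀ x : E, (1 + Complex.I * (t : ℂ)) • x = x + t • (Complex.I • x) := by
        intro x
        rw [add_smul, one_smul, mul_comm, mul_smul]
        congr 1
        rw [← algebraMap_smul ℂ t (Complex.I • x)]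
        rfl
      have e1 := hhom (1 + Complex.I * t) v h
      have e2 := hhom (1 + Complex.I * t) v (Complex.I • h)
      rw [e v, e h] at e1
      rw [e v, e (Complex.I • h)] at e2
      rw [smul_smul Complex.I, Complex.I_mul_I, neg_smul, one_smul] at e2
      simp only [map_add, map_smul, map_neg, hq1, hq2, Complex.real_smul] at e1 e2
      rw [hb]
      linear_combination e1 + Complex.I * e2 - (t : ℂ) * q2.eval (t : ℂ) * Complex.I_mul_I
    have hpoly : (1 - Polynomial.C Complex.I * Polynomial.X) * (q1 + Polynomial.C Complex.I * q2) =
        (1 + Polynomial.C Complex.I * Polynomial.X) ^ k * Polynomial.C b := by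
      apply Polynomial.eq_of_infinite_eval_eq
      refine Set.Infinite.mono (s := Set.range (fun t : ℝ => (t : ℂ))) ?_
        (Set.infinite_range_of_injective Complex.ofReal_injective)
      rintro _ ⟨t, rfl⟩
      simpa using key t
    have h3 := congrArg (Polynomial.eval (-Complex.I)) hpoly
    simp only [Polynomial.eval_mul, Polynomial.eval_sub, Polynomial.eval_add, Polynomial.eval_pow,
      Polynomial.eval_one, Polynomial.eval_C, Polynomial.eval_X, mul_neg, Complex.I_mul_I,
      neg_neg, sub_self, zero_mul] at h3
    have hb0 : b = 0 := by
      rcases mul_eq_zero.1 h3.symm with h4 | h4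
      · exfalso
        exact pow_ne_zero k (by norm_num) h4
      · exact h4
    rw [hb] at hb0
    linear_combination (-Complex.I) * hb0 + L v (Complex.I • h) * Complex.I_mul_I
  intro v
  rw [differentiableAt_iff_restrictScalars ℝ (hL v).differentiableAt, (hL v).fderiv]
  refine ⟨⟨⟨⟨L v, map_add (L v)⟩, ?_⟩, (L v).continuous⟩, ?_⟩
  · intro c x
    simp only [RingHom.id_apply, smul_eq_mul]
    have e : c • x = c.re • x + c.im • (Complex.I • x) := by
      conv_lhs => rw [← Complex.re_add_im c]
      rw [add_smul, mul_smul, ← algebraMap_smul ℂ c.re x, ← algebraMap_smul ℂ c.im (Complex.I • x)]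
      rfl
    change L v (c • x) = c * L v x
    rw [e, map_add, map_smul, map_smul, hI]
    conv_rhs => rw [← Complex.re_add_im c]
    simp only [Complex.real_smul]
    ring
  · ext x; rfl


theorem fo_sub1 (f : ℂ → ℂ) (hf : Differentiable ℂ f) :
    Real.posLog ‖f 0‖ ≤ Real.circleAverage (fun z => Real.posLog ‖f z‖) 0 1 := by
  by_cases h : ‖f 0‖ ≤ 1
  · rw [(Real.posLog_eq_zero_iff _).2 (by simpa using h)]
    exact Real.circleAverage_nonneg_of_nonneg (fun _ _ => Real.posLog_nonneg)
  push Not at h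
  have h0 : f 0 ≠ 0 := by
    intro h0; rw [h0, norm_zero] at h; linarith
  have han : AnalyticOnNhd ℂ f (closedBall 0 |1|) := fun z _ => hf.analyticAt z
  have hJ := han.circleAverage_log_norm one_ne_zero h0
  have hnn : 0 ≤ ∑ᶠ u, (MeromorphicOn.divisor f (closedBall (0 : ℂ) |1|) u : ℝ)
      * Real.log (1 * ‖0 - u‖⁻¹) := by
    refine finsum_nonneg fun u => ?_
    by_cases hu : u ∈ closedBall (0 : ℂ) |1|
    · refine mul_nonneg (mod_cast MeromorphicOn.AnalyticOnNhd.divisor_nonneg han ..) ?_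
      simp only [abs_one, mem_closedBall, dist_zero_right] at hu
      rw [zero_sub, norm_neg, one_mul, Real.log_inv]
      have := Real.log_nonpos (norm_nonneg u) hu
      linarith
    · rw [Function.locallyFinsuppWithin.apply_eq_zero_of_notMem _ hu]
      simp
  have hmer : MeromorphicOn f (sphere 0 |1|) := fun z _ => (hf.analyticAt z).meromorphicAt
  calc Real.posLog ‖f 0‖ = Real.log ‖f 0‖ := Real.posLog_eq_log (by simpa using h.le)
    _ ≤ Real.circleAverage (fun z => Real.log ‖f z‖) 0 1 := by rw [hJ]; linarith
    _ ≤ _ := Real.circleAverage_mono hmer.circleIntegrable_log_norm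
        hmer.circleIntegrable_posLog_norm (fun z _ => le_max_right _ _)

open MeasureTheory

theorem fo_rot {E : Type*} [NormedAddCommGroup E] [NormedSpace ℂ E] [FiniteDimensional ℂ E]
    [MeasurableSpace E] [BorelSpace E] (μ : Measure E) [μ.IsAddHaarMeasure] (c : ℂ)
    (hc : ‖c‖ = 1) (δ : ℝ) (g : E → ℝ) :
    ∫ w in closedBall 0 δ, g (c • w) ∂μ = ∫ w in closedBall 0 δ, g w ∂μ := by
  have hc0 : c ≠ 0 := by intro h; rw [h, norm_zero] at hc; norm_num at hc
  let f : E →ₗ[ℝ] E := (c • LinearMap.id : E →ₗ[ℂ] E).restrictScalars ℝ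
  have hf : ∀ w, f w = c • w := fun w => rfl
  have hpre : ∀ r : ℝ, f ⁻¹' (closedBall 0 r) = closedBall 0 r := by
    intro r; ext w; simp [hf, norm_smul, hc]
  have hdet : LinearMap.det f ≠ 0 := by
    have hinj : Function.Injective f := fun x y hxy => smul_right_injective E hc0 hxy
    have := (LinearEquiv.ofInjectiveEndo f hinj).isUnit_det'
    exact this.ne_zero
  have h1 := Measure.addHaar_preimage_linearMap μ hdet (closedBall 0 1)
  rw [hpre] at h1
  have hpos : μ (closedBall (0 : E) 1) ≠ 0 := (measure_closedBall_pos μ 0 one_pos).ne'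
  have hfin : μ (closedBall (0 : E) 1) ≠ ⊤ := measure_closedBall_lt_top.ne
  have h2 : ENNReal.ofReal |(LinearMap.det f)⁻¹| = 1 := by
    rw [eq_comm] at h1
    exact (ENNReal.mul_eq_right hpos hfin).1 h1
  have hmap := Measure.map_linearMap_addHaar_eq_smul_addHaar μ hdet
  rw [h2, one_smul] at hmap
  have hemb : MeasurableEmbedding f := by
    have : (f : E → E) = (Homeomorph.smulOfNeZero c hc0 : E ≃ₜ E) := by ext w; rfl
    rw [this]
    exact (Homeomorph.smulOfNeZero c hc0 : E ≃ₜ E).measurableEmbedding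
  have hmp : MeasurePreserving f μ μ := ⟨hemb.measurable, hmap⟩
  have := hmp.setIntegral_preimage_emb hemb g (closedBall 0 δ)
  rw [hpre] at this
  exact this

theorem fo_sub2 {E : Type*} [NormedAddCommGroup E] [NormedSpace ℂ E] [FiniteDimensional ℂ E]
    [MeasurableSpace E] [BorelSpace E] (μ : Measure E) [μ.IsAddHaarMeasure]
    (a : E → ℂ) (ha : Differentiable ℂ a) (z : E) (δ : ℝ) :
    μ.real (closedBall 0 δ) * Real.posLog ‖a z‖ ≤
      ∫ w in closedBall 0 δ, Real.posLog ‖a (z + w)‖ ∂μ := by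
  have := FiniteDimensional.proper ℂ E
  set G : E → ℝ := fun w => Real.posLog ‖a (z + w)‖ with hG
  have hac : Continuous a := ha.continuous
  have hGc : Continuous G := by
    exact Real.continuous_posLog.comp (by fun_prop)
  have h1 : ∀ w, 2 * Real.pi * G 0 ≤ ∫ θ in (0 : ℝ)..2 * Real.pi, G (circleMap 0 1 θ • w) := by
    intro w
    have h := fo_sub1 (fun ζ => a (z + ζ • w)) (by fun_prop)
    rw [Real.circleAverage_def, smul_eq_mul, zero_smul] at h
    have hp : 0 < 2 * Real.pi := by positivity
    rw [inv_mul_eq_div, le_div_iff₀ hp] at h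
    calc _ = Real.posLog ‖a (z + 0)‖ * (2 * Real.pi) := mul_comm _ _
      _ ≤ _ := h
  have hcont : Continuous (Function.uncurry fun (θ : ℝ) (w : E) => G (circleMap 0 1 θ • w)) := by
    have : Continuous (fun p : ℝ × E => circleMap 0 1 p.1 • p.2) :=
      ((continuous_circleMap 0 1).comp continuous_fst).smul continuous_snd
    exact hGc.comp this
  have hcont2 : Continuous (Function.uncurry fun (w : E) (θ : ℝ) => G (circleMap 0 1 θ • w)) := by
    have : Continuous (fun p : E × ℝ => circleMap 0 1 p.2 • p.1) :=
      ((continuous_circleMap 0 1).comp continuous_snd).smul continuous_fst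
    exact hGc.comp this
  have hint : Integrable (Function.uncurry fun (θ : ℝ) (w : E) => G (circleMap 0 1 θ • w))
      ((volume.restrict (Set.uIoc 0 (2 * Real.pi))).prod (μ.restrict (closedBall 0 δ))) := by
    rw [Measure.prod_restrict]
    have : IntegrableOn (Function.uncurry fun (θ : ℝ) (w : E) => G (circleMap 0 1 θ • w))
        (Set.Icc 0 (2 * Real.pi) ×ˢ closedBall 0 δ) ((volume : Measure ℝ).prod μ) :=
      hcont.continuousOn.integrableOn_compact (isCompact_Icc.prod (isCompact_closedBall 0 δ))
    refine this.mono_set (Set.prod_mono ?_ le_rfl)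
    rw [Set.uIoc_of_le (by positivity)]
    exact Set.Ioc_subset_Icc_self
  have hsw := intervalIntegral_integral_swap hint
  have h2 : ∫ w in closedBall 0 δ, (2 * Real.pi * G 0) ∂μ ≤
      ∫ w in closedBall 0 δ, (∫ θ in (0 : ℝ)..2 * Real.pi, G (circleMap 0 1 θ • w)) ∂μ := by
    refine integral_mono ?_ ?_ h1
    · exact (continuous_const.continuousOn.integrableOn_compact (isCompact_closedBall 0 δ))
    · refine ContinuousOn.integrableOn_compact (isCompact_closedBall 0 δ) (Continuous.continuousOn ?_)
      exact intervalIntegral.continuous_parametric_intervalIntegral_of_continuous' hcont2 _ _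
  rw [← hsw] at h2
  have h3 : ∀ θ : ℝ, ∫ w in closedBall 0 δ, G (circleMap 0 1 θ • w) ∂μ =
      ∫ w in closedBall 0 δ, G w ∂μ := fun θ => fo_rot μ _ (by simp) δ G
  simp only [h3] at h2
  rw [setIntegral_const, intervalIntegral.integral_const, sub_zero, smul_eq_mul, smul_eq_mul] at h2
  have hp : 0 < 2 * Real.pi := by positivity
  have hG0 : G 0 = Real.posLog ‖a z‖ := by simp [hG]
  rw [← hG0]
  refine le_of_mul_le_mul_left ?_ hp
  linarith

theorem fo_hartogs {E : Type*} [NormedAddCommGroup E] [NormedSpace ℂ E] [FiniteDimensional ℂ E]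
    (a : ℕ → E → ℂ) (ha : ∀ k, Differentiable ℂ (a k)) (M C : ℝ) (hM : 1 ≤ M) (hC : 1 ≤ C)
    (hb : ∀ k v, ‖v‖ < 1 → ‖a k v‖ ≤ M * C ^ k)
    (hpt : ∀ v, ‖v‖ < 1 → ∃ m : ℝ, ∀ k, ‖a k v‖ ≤ m) (q : E) (hq : ‖q‖ < 1) (s : ℝ)
    (hs : 1 < s) : ∃ δ > 0, ∃ K : ℝ, ∀ k, ∀ z ∈ ball q δ, ‖a k z‖ ≤ K * s ^ k := by
  borelize E
  have := FiniteDimensional.proper ℂ E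
  let μ : Measure E := Measure.addHaar
  set δ : ℝ := (1 - ‖q‖) / 3 with hδ
  have hδ0 : 0 < δ := by rw [hδ]; linarith
  set B : Set E := closedBall q (2 * δ) with hB
  have hB1 : ∀ z ∈ B, ‖z‖ < 1 := by
    intro z hz
    have h1 : ‖z - q‖ ≤ 2 * δ := by simpa [hB, dist_eq_norm] using hz
    have h2 : ‖z‖ ≤ ‖z - q‖ + ‖q‖ := by simpa using norm_add_le (z - q) q
    linarith
  let bad : ℕ → Set E := fun m => B ∩ {z | ∃ k, (m : ℝ) < ‖a k z‖}
  have hbm : ∀ m, MeasurableSet (bad m) := by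
    intro m
    refine measurableSet_closedBall.inter ?_
    rw [Set.ofPred_exists]
    exact MeasurableSet.iUnion fun k =>
      (isOpen_lt continuous_const (ha k).continuous.norm).measurableSet
  have hBf : μ B ≠ ⊤ := measure_closedBall_lt_top.ne
  have hlim : Filter.Tendsto (fun m => μ (bad m)) Filter.atTop (nhds 0) := by
    have h1 : Antitone bad := by
      intro m n hmn z hz
      obtain ⟨hz1, k, hk⟩ := hz
      exact ⟨hz1, k, lt_of_le_of_lt (by exact_mod_cast hmn) hk⟩
    have h2 : ⋂ m, bad m = ∅ := by
      rw [Set.eq_empty_iff_forall_notMem]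
      intro z hz
      rw [Set.mem_iInter] at hz
      obtain ⟨m, hm⟩ := hpt z (hB1 z (hz 0).1)
      obtain ⟨N, hN⟩ := exists_nat_ge m
      obtain ⟨_, k, hk⟩ := hz N
      linarith [hm k]
    have := tendsto_measure_iInter_atTop (μ := μ) (fun m => (hbm m).nullMeasurableSet) h1
      ⟨0, ne_top_of_le_ne_top hBf (measure_mono Set.inter_subset_left)⟩
    rw [h2, measure_empty] at this
    exact this
  have hls : 0 < Real.log s := Real.log_pos hs
  have hlC : 0 ≤ Real.log C := Real.log_nonneg hC
  have hlM : 0 ≤ Real.log M := Real.log_nonneg hM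
  set η : ℝ := Real.log s / (Real.log C + Real.log s) with hη
  have hη0 : 0 < η := by positivity
  have hη1 : η ≤ 1 := by rw [hη, div_le_one (by positivity)]; linarith
  have hη2 : η * Real.log C ≤ Real.log s := by
    rw [hη, div_mul_eq_mul_div, div_le_iff₀ (by positivity)]
    nlinarith
  set V : ℝ := μ.real (closedBall 0 δ) with hV
  have hV0 : 0 < V := by
    rw [hV, Measure.real, ENNReal.toReal_pos_iff]
    exact ⟨measure_closedBall_pos μ 0 hδ0, measure_closedBall_lt_top⟩
  obtain ⟨m, hm⟩ : ∃ m, μ (bad m) < ENNReal.ofReal (η * V) := by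
    have : (0 : ENNReal) < ENNReal.ofReal (η * V) := by
      rw [ENNReal.ofReal_pos]; positivity
    exact (hlim.eventually (gt_mem_nhds this)).exists
  have hm' : μ.real (bad m) ≤ η * V :=
    ENNReal.toReal_le_of_le_ofReal (by positivity) hm.le
  refine ⟨δ, hδ0, Real.exp (Real.posLog m + Real.log M), fun k z hz => ?_⟩
  set T : ℝ := Real.log M + k * Real.log C with hT
  have hT0 : 0 ≤ T := by positivity
  have hsub := fo_sub2 μ (a k) (ha k) z δ
  have hzq : ‖z - q‖ < δ := by simpa [dist_eq_norm] using hz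
  have hin : ∀ w ∈ closedBall (0 : E) δ, z + w ∈ B := by
    intro w hw
    have hw' : ‖w‖ ≤ δ := by simpa using hw
    rw [hB, mem_closedBall, dist_eq_norm]
    have h2 : ‖z + w - q‖ ≤ ‖z - q‖ + ‖w‖ := by
      simpa [add_sub_right_comm] using norm_add_le (z - q) w
    linarith
  set bz : Set E := (fun w => z + w) ⁻¹' bad m with hbz
  have hbzm : MeasurableSet bz := (measurable_const_add z) (hbm m)
  have hbzμ : μ.real bz = μ.real (bad m) := by
    rw [hbz, Measure.real, Measure.real, measure_preimage_add]
  have hle : ∀ w ∈ closedBall (0 : E) δ, Real.posLog ‖a k (z + w)‖ ≤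
      Real.posLog m + bz.indicator (fun _ => T) w := by
    intro w hw
    by_cases hwb : w ∈ bz
    · rw [Set.indicator_of_mem hwb]
      have h1 := hb k (z + w) (hB1 _ (hin w hw))
      have h2 := Real.posLog_le_posLog (norm_nonneg _) h1
      have h3 : Real.posLog (M * C ^ k) = T := by
        have hMC : 1 ≤ M * C ^ k := one_le_mul_of_one_le_of_one_le hM (one_le_pow₀ hC)
        rw [Real.posLog_eq_log (by rwa [abs_of_pos (by linarith)]), Real.log_mul (by positivity)
          (by positivity), Real.log_pow]
      have := Real.posLog_nonneg (x := (m : ℝ))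
      linarith
    · rw [Set.indicator_of_notMem hwb, add_zero]
      have : ‖a k (z + w)‖ ≤ m := by
        by_contra hcon
        push Not at hcon
        exact hwb ⟨hin w hw, k, hcon⟩
      exact Real.posLog_le_posLog (norm_nonneg _) this
  have hcb : μ (closedBall (0 : E) δ) ≠ ⊤ := measure_closedBall_lt_top.ne
  have hi1 : IntegrableOn (fun w => bz.indicator (fun _ => T) w) (closedBall (0 : E) δ) μ :=
    (integrableOn_const hcb).indicator hbzm
  have hi2 : IntegrableOn (fun _ : E => Real.posLog (m : ℝ)) (closedBall (0 : E) δ) μ :=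
    integrableOn_const hcb
  have hint : ∫ w in closedBall 0 δ, Real.posLog ‖a k (z + w)‖ ∂μ ≤
      ∫ w in closedBall 0 δ, (Real.posLog m + bz.indicator (fun _ => T) w) ∂μ := by
    refine setIntegral_mono_on ?_ (hi2.add hi1) measurableSet_closedBall hle
    refine ContinuousOn.integrableOn_compact (isCompact_closedBall 0 δ) (Continuous.continuousOn ?_)
    have := (ha k).continuous
    exact Real.continuous_posLog.comp (by fun_prop)
  rw [integral_add hi2 hi1, setIntegral_const, setIntegral_indicator hbzm, setIntegral_const,
    smul_eq_mul, smul_eq_mul, ← hV] at hint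
  have hbzf : μ bz ≠ ⊤ := by
    rw [hbz, measure_preimage_add]; exact ne_top_of_lt hm
  have hmono : μ.real (closedBall 0 δ ∩ bz) ≤ η * V := by
    refine le_trans ?_ hm'
    rw [← hbzμ]
    exact measureReal_mono Set.inter_subset_right hbzf
  have hfin : Real.posLog ‖a k z‖ ≤ Real.posLog m + η * T := by
    refine le_of_mul_le_mul_left ?_ hV0
    have := mul_le_mul_of_nonneg_right hmono hT0
    nlinarith
  have hηT : η * T ≤ Real.log M + k * Real.log s := by
    have h1 : η * Real.log M ≤ Real.log M := by nlinarith
    have h2 : (k : ℝ) * (η * Real.log C) ≤ k * Real.log s :=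
      mul_le_mul_of_nonneg_left hη2 (by positivity)
    rw [hT]; nlinarith
  by_cases ha0 : a k z = 0
  · rw [ha0, norm_zero]; positivity
  have hlog : Real.log ‖a k z‖ ≤ Real.posLog ‖a k z‖ := le_max_right _ _
  calc ‖a k z‖ = Real.exp (Real.log ‖a k z‖) := (Real.exp_log (norm_pos_iff.2 ha0)).symm
    _ ≤ Real.exp ((Real.posLog m + Real.log M) + k * Real.log s) := Real.exp_le_exp.2 (by linarith)
    _ = _ := by rw [Real.exp_add, ← Real.log_pow, Real.exp_log (by positivity)]

theorem fo_main {E : Type*} [NormedAddCommGroup E] [NormedSpace ℂ E] [NormedSpace ℝ E]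
    [IsScalarTower ℝ ℂ E] [FiniteDimensional ℂ E] (F : E → ℂ)
    (hsmooth : ∀ k : ℕ, 0 < k → ∃ U : Set E, IsOpen U ∧ (0 : E) ∈ U ∧ ContDiffOn ℝ k F U)
    (hslice : ∀ v : E, ‖v‖ = 1 →
      DifferentiableOn ℂ (fun ζ : ℂ => F (ζ • v)) (ball (0 : ℂ) 1)) :
    DifferentiableOn ℂ F (ball (0 : E) 1) := by
  have hs := fo_slice F hslice
  have htay : ∀ (k : ℕ) (v : E) (ζ : ℂ), iteratedFDeriv ℝ k F 0 (fun _ => ζ • v) =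
      ζ ^ k * iteratedDeriv k (fun ζ : ℂ => F (ζ • v)) 0 := by
    intro k v ζ
    obtain ⟨U, hU, h0, hF⟩ := hsmooth (k + 1) (Nat.succ_pos k)
    have hR : 0 < (‖v‖ + 1)⁻¹ := by positivity
    refine fo_taylor F k U hU h0 (hF.of_le (by exact_mod_cast Nat.le_succ k)) v _ hR (hs v _ ?_) ζ
    rw [inv_mul_le_iff₀ (by positivity)]
    linarith
  have htay1 : ∀ (k : ℕ) (v : E), iteratedFDeriv ℝ k F 0 (fun _ => v) =
      iteratedDeriv k (fun ζ : ℂ => F (ζ • v)) 0 := by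
    intro k v
    simpa using htay k v 1
  let a : ℕ → E → ℂ := fun k v => (k.factorial : ℂ)⁻¹ * iteratedFDeriv ℝ k F 0 (fun _ => v)
  have ha : ∀ k, Differentiable ℂ (a k) := fun k =>
    (fo_hol k _ (fun ζ v => by rw [htay, htay1])).const_mul _
  have hhom : ∀ k (ζ : ℂ) (v : E), a k (ζ • v) = ζ ^ k * a k v := by
    intro k ζ v
    simp only [a]
    rw [htay, htay1]; ring
  have hsum : ∀ v, ‖v‖ < 1 → HasSum (fun k => a k v) (F v) := by
    intro v hv
    obtain ⟨R, hR1, hR⟩ : ∃ R : ℝ, 1 < R ∧ R * ‖v‖ ≤ 1 := by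
      by_cases h0 : v = 0
      · exact ⟨2, by norm_num, by simp [h0]⟩
      · have : 0 < ‖v‖ := norm_pos_iff.2 h0
        exact ⟨‖v‖⁻¹, (one_lt_inv₀ this).2 hv, by rw [inv_mul_cancel₀ this.ne']⟩
    have h1 : (1 : ℂ) ∈ ball (0 : ℂ) R := by simpa using hR1
    have := Complex.hasSum_taylorSeries_on_ball (hs v R hR) h1
    simp only [sub_zero, one_pow, one_smul, smul_eq_mul, one_mul] at this
    simpa only [a, htay1] using this
  have hpt : ∀ v, ‖v‖ < 1 → ∃ m : ℝ, ∀ k, ‖a k v‖ ≤ m := by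
    intro v hv
    obtain ⟨m, hm⟩ := (hsum v hv).summable.tendsto_atTop_zero.norm.bddAbove_range
    exact ⟨m, fun k => hm ⟨k, rfl⟩⟩
  obtain ⟨r, M, hr0, hr1, hM, hFM⟩ : ∃ r M : ℝ, 0 < r ∧ r ≤ 1 ∧ 1 ≤ M ∧
      ∀ v : E, ‖v‖ < r → ‖F v‖ ≤ M := by
    obtain ⟨U, hU, h0, hF⟩ := hsmooth 1 one_pos
    have hc : ContinuousAt F 0 := hF.continuousOn.continuousAt (hU.mem_nhds h0)
    obtain ⟨ε, hε, h⟩ := Metric.continuousAt_iff.1 hc 1 one_pos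
    refine ⟨min ε 1, ‖F 0‖ + 1, by positivity, min_le_right _ _, by
      linarith [norm_nonneg (F 0)], fun v hv => ?_⟩
    have h1 := h (x := v) (by simpa using lt_of_lt_of_le hv (min_le_left _ _))
    rw [dist_eq_norm] at h1
    have h2 : ‖F v‖ ≤ ‖F v - F 0‖ + ‖F 0‖ := by simpa using norm_add_le (F v - F 0) (F 0)
    linarith
  have hb : ∀ k v, ‖v‖ < 1 → ‖a k v‖ ≤ M * ((r / 2)⁻¹) ^ k := by
    intro k v hv
    have hd : DifferentiableOn ℂ (fun ζ : ℂ => F (ζ • v)) (ball (0 : ℂ) r) :=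
      hs v r (by nlinarith [norm_nonneg v])
    have hdc := hd.diffContOnCl_ball (c := 0) (R := r / 2)
      (closedBall_subset_ball (by linarith))
    have := Complex.norm_iteratedDeriv_le_of_forall_mem_sphere_norm_le k (by positivity) hdc
      (C := M) (fun z hz => hFM _ (by
        have : ‖z‖ = r / 2 := by simpa using hz
        rw [norm_smul, this]; nlinarith [norm_nonneg v]))
    simp only [a]
    rw [htay1, norm_mul, norm_inv, Complex.norm_natCast]
    have hk : (0 : ℝ) < k.factorial := by exact_mod_cast k.factorial_pos
    rw [inv_mul_le_iff₀ hk, inv_pow, ← div_eq_mul_inv, ← mul_div_assoc]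
    exact this
  intro p hp
  have hp1 : ‖p‖ < 1 := by simpa using hp
  obtain ⟨S, hS1, hSp⟩ : ∃ S : ℝ, 1 < S ∧ S * ‖p‖ < 1 := by
    have := norm_nonneg p
    refine ⟨2 / (1 + ‖p‖), ?_, ?_⟩
    · rw [lt_div_iff₀ (by positivity)]; linarith
    · rw [div_mul_eq_mul_div, div_lt_one (by positivity)]; linarith
  obtain ⟨s, hs1, hsS⟩ := exists_between hS1
  have hS0 : 0 < S := by linarith
  have hSn : ‖(S : ℂ)‖ = S := by rw [Complex.norm_real, Real.norm_of_nonneg hS0.le]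
  obtain ⟨δ, hδ, K, hK⟩ := fo_hartogs a ha M ((r / 2)⁻¹) hM
    ((one_le_inv₀ (by positivity)).2 (by linarith)) hb hpt ((S : ℂ) • p)
    (by rw [norm_smul, hSn]; exact hSp) s hs1
  set ε : ℝ := min (δ / S) (1 - ‖p‖) with hε
  have hε0 : 0 < ε := lt_min (by positivity) (by linarith)
  let u : ℕ → ℝ := fun k => K * (s / S) ^ k
  have hu : Summable u := (summable_geometric_of_lt_one (by positivity)
    ((div_lt_one hS0).2 hsS)).mul_left K
  have hau : ∀ k, ∀ z ∈ ball p ε, ‖a k z‖ ≤ u k := by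
    intro k z hz
    have hz1 : ‖z - p‖ < δ / S := by
      rw [mem_ball, dist_eq_norm] at hz
      exact lt_of_lt_of_le hz (min_le_left _ _)
    have h1 := hK k ((S : ℂ) • z) (by
      rw [mem_ball, dist_eq_norm, ← smul_sub, norm_smul, hSn]
      rw [lt_div_iff₀ hS0] at hz1
      linarith)
    rw [hhom, norm_mul, norm_pow, hSn] at h1
    simp only [u]
    rw [div_pow, ← mul_div_assoc, le_div_iff₀ (by positivity)]
    linarith
  have hin : ∀ z ∈ ball p ε, ‖z‖ < 1 := by
    intro z hz
    rw [mem_ball, dist_eq_norm] at hz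
    have h1 := lt_of_lt_of_le hz (min_le_right _ _)
    have h2 : ‖z‖ ≤ ‖z - p‖ + ‖p‖ := by simpa using norm_add_le (z - p) p
    linarith
  have hpm : p ∈ ball p (ε / 2) := mem_ball_self (by positivity)
  have hder : ∀ k, ∀ x ∈ ball p (ε / 2), ‖fderiv ℂ (a k) x‖ ≤ 2 * u k / (ε / 2) := by
    intro k x hx
    have hsub : ball x (ε / 2) ⊆ ball p ε := by
      refine ball_subset_ball' ?_
      rw [mem_ball] at hx
      linarith
    refine Complex.norm_fderiv_le_div_of_mapsTo_ball (ha k).differentiableOn ?_ (by positivity)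
    intro y hy
    rw [mem_closedBall, dist_eq_norm]
    have h1 := hau k y (hsub hy)
    have h2 := hau k x (hsub (mem_ball_self (by positivity)))
    linarith [norm_sub_le (a k y) (a k x)]
  have hfin := hasFDerivAt_tsum_of_isPreconnected (𝕜 := ℂ) (f := a)
    (f' := fun k x => fderiv ℂ (a k) x)
    (u := fun k => 2 * u k / (ε / 2)) ((hu.mul_left 2).div_const _) isOpen_ball
    (convex_ball p (ε / 2)).isPreconnected (fun k x _ => (ha k x).hasFDerivAt) hder hpm
    (hsum p hp1).summable hpm
  refine (hfin.differentiableAt.congr_of_eventuallyEq ?_).differentiableWithinAt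
  filter_upwards [ball_mem_nhds p hε0] with z hz
  exact ((hsum z (hin z hz)).tsum_eq).symm

/-- **Forelli's theorem** (Forelli 1977, Stoll 1980). If `F` is `C^k` near the origin for
every `k` and holomorphic along every radial complex line, then `F` is holomorphic on the
unit ball of `ℂ^n`. -/
theorem forelli_theorem (n : ℕ) (F : EuclideanSpace ℂ (Fin n) → ℂ)
    (hsmooth : ∀ k : ℕ, 0 < k → ∃ U : Set (EuclideanSpace ℂ (Fin n)),
      IsOpen U ∧ (0 : EuclideanSpace ℂ (Fin n)) ∈ U ∧ ContDiffOn ℝ k F U)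
    (hslice : ∀ v : EuclideanSpace ℂ (Fin n), ‖v‖ = 1 →
      DifferentiableOn ℂ (fun ζ : ℂ => F (ζ • v)) (ball (0 : ℂ) 1)) :
    DifferentiableOn ℂ F (ball (0 : EuclideanSpace ℂ (Fin n)) 1) := by
  exact fo_main F hsmooth hslice
end

section
/- Let λ_1, …, λ_n be complex numbers with Re λ_j > 0 for every j, and for each j let g_j be a polynomial in z_1,…,z_{j−1} only with zero constant term, so that X = Σ_{j=1}^n (λ_j z_j + g_j(z_1,…,z_{j−1})) ∂/∂z_j is a holomorphic vector field contracting at the origin. If f : B^n → ℂ is real-analytic and satisfies X̄f = 0 at every point of B^n, i.e. Σ_{j=1}^n conj(λ_j z_j + g_j(z)) · (∂f/∂z̄_j)(z) = 0 for all z ∈ B^n, then f is holomorphic on B^n. -/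
open Metric

namespace Forelli
open Filter Topology
noncomputable section

abbrev E (n : ℕ) := EuclideanSpace ℂ (Fin n)

def sg (b : Bool) : ℂ := if b then Complex.I else -Complex.I

def op {n : ℕ} (l : Bool × Fin n) (h : E n → ℂ) : E n → ℂ := fun x =>
  (1 / 2 : ℂ) * (fderiv ℝ h x (EuclideanSpace.single l.2 1) +
          sg l.1 * fderiv ℝ h x (Complex.I • EuclideanSpace.single l.2 1))

def W {n : ℕ} : List (Bool × Fin n) → (E n → ℂ) → (E n → ℂ)
  | [], h => h
  | l :: T, h => W T (op l h)

def cc {n : ℕ} (i : Fin n) : E n →L[ℝ] ℂ :=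
  (Complex.conjCLE : ℂ →L[ℝ] ℂ).comp ((EuclideanSpace.proj i : E n →L[ℂ] ℂ).restrictScalars ℝ)

variable {n : ℕ}

lemma cc_apply (i : Fin n) (x : E n) : cc i x = (starRingEnd ℂ) (x i) := by
  simp [cc]

lemma cc_an (i : Fin n) (x : E n) : AnalyticAt ℝ (fun y => cc i y) x := (cc i).analyticAt x

lemma op_an {h : E n → ℂ} {x : E n} (l) (hh : AnalyticAt ℝ h x) : AnalyticAt ℝ (op l h) x := by
  have h1 := hh.fderiv
  have h2 : ∀ v : E n, AnalyticAt ℝ (fun x => fderiv ℝ h x v) x := fun v =>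
    (ContinuousLinearMap.apply ℝ ℂ v).analyticAt _ |>.comp h1
  exact analyticAt_const.mul ((h2 _).add (analyticAt_const.mul (h2 _)))

lemma W_an (T) : ∀ {h : E n → ℂ} {x : E n} (_ : AnalyticAt ℝ h x), AnalyticAt ℝ (W T h) x := by
  induction T with
  | nil => intro h x hh; exact hh
  | cons l T ih => intro h x hh; exact ih (op_an l hh)

lemma op_congr {h k : E n → ℂ} {x : E n} (l) (hh : h =ᶠ[𝓝 x] k) : op l h =ᶠ[𝓝 x] op l k := by
  filter_upwards [hh.fderiv (𝕜 := ℝ)] with y hy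
  simp [op, hy]

lemma W_congr (T) : ∀ {h k : E n → ℂ} {x : E n} (_ : h =ᶠ[𝓝 x] k), W T h =ᶠ[𝓝 x] W T k := by
  induction T with
  | nil => intro h k x hh; exact hh
  | cons l T ih => intro h k x hh; exact ih (op_congr l hh)

lemma W_congr0 (T) {h k : E n → ℂ} {x : E n} (hh : h =ᶠ[𝓝 x] k) : W T h x = W T k x :=
  (W_congr T hh).eq_of_nhds

lemma op_add {h k : E n → ℂ} {x : E n} (l) (hh : AnalyticAt ℝ h x) (hk : AnalyticAt ℝ k x) :
    op l (fun y => h y + k y) =ᶠ[𝓝 x] fun y => op l h y + op l k y := by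
  filter_upwards [hh.eventually_analyticAt, hk.eventually_analyticAt] with y h1 h2
  simp only [op]
  rw [fderiv_fun_add h1.differentiableAt h2.differentiableAt]
  simp
  ring

lemma W_add (T) : ∀ {h k : E n → ℂ} {x : E n} (_ : AnalyticAt ℝ h x) (_ : AnalyticAt ℝ k x),
    W T (fun y => h y + k y) x = W T h x + W T k x := by
  induction T with
  | nil => intros; rfl
  | cons l T ih =>
    intro h k x hh hk
    simp only [W]
    rw [W_congr0 T (op_add l hh hk), ih (op_an l hh) (op_an l hk)]

lemma op_mul {h k : E n → ℂ} {x : E n} (l) (hh : AnalyticAt ℝ h x) (hk : AnalyticAt ℝ k x) :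
    op l (fun y => h y * k y) =ᶠ[𝓝 x] fun y => op l h y * k y + h y * op l k y := by
  filter_upwards [hh.eventually_analyticAt, hk.eventually_analyticAt] with y h1 h2
  simp only [op]
  rw [fderiv_fun_mul h1.differentiableAt h2.differentiableAt]
  simp
  ring

lemma op_const (c : ℂ) (l) : op l (fun _ : E n => c) = fun _ => 0 := by
  ext x; simp [op]

lemma op_cc (i : Fin n) (l) : op l (fun y : E n => cc i y) =
    fun _ => if l = (true, i) then 1 else 0 := by
  ext x
  obtain ⟨b, j⟩ := l
  simp only [op]
  have : fderiv ℝ (fun y : E n => cc i y) x = cc i := (cc i).fderiv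
  rw [this, cc_apply, cc_apply]
  by_cases hij : i = j
  · subst hij
    cases b <;> (simp [sg]; try norm_num)
  · have : ¬ j = i := fun h => hij h.symm
    cases b <;> simp [sg, this, hij]

lemma W_const_mul (c : ℂ) (T) : ∀ {h : E n → ℂ} {x : E n} (_ : AnalyticAt ℝ h x),
    W T (fun y => c * h y) x = c * W T h x := by
  induction T with
  | nil => intros; rfl
  | cons l T ih =>
    intro h x hh
    simp only [W]
    rw [W_congr0 T (op_mul l analyticAt_const hh), op_const]
    simp only [zero_mul, zero_add]
    rw [ih (op_an l hh)]

lemma W_zero (T) (x : E n) : W T (fun _ => (0:ℂ)) x = 0 := by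
  have := W_const_mul 0 T (h := fun _ => (0:ℂ)) (x := x) analyticAt_const
  simpa using this

lemma W_sum {ι : Type*} (s : Finset ι) (T) {h : ι → E n → ℂ} {x : E n}
    (hh : ∀ i, AnalyticAt ℝ (h i) x) :
    W T (fun y => ∑ i ∈ s, h i y) x = ∑ i ∈ s, W T (h i) x := by
  classical
  induction s using Finset.induction_on with
  | empty => simp [W_zero]
  | insert a s ha ih =>
    simp only [Finset.sum_insert ha]
    rw [W_add T (hh a) (Finset.analyticAt_fun_sum _ (fun i _ => hh i)), ih]

lemma op_comm {h : E n → ℂ} {x : E n} (l m) (hh : AnalyticAt ℝ h x) :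
    op l (op m h) =ᶠ[𝓝 x] op m (op l h) := by
  filter_upwards [hh.eventually_analyticAt] with y h1
  have hs := (h1.contDiffAt (n := 2)).isSymmSndFDerivAt (by simp)
  have hd : DifferentiableAt ℝ (fderiv ℝ h) y := h1.fderiv.differentiableAt
  have hv : ∀ v : E n, DifferentiableAt ℝ (fun z => fderiv ℝ h z v) y := fun v =>
    hd.clm_apply (differentiableAt_const _)
  have key : ∀ l : Bool × Fin n, ∀ u : E n, fderiv ℝ (op l h) y u =
      (1 / 2 : ℂ) * (fderiv ℝ (fderiv ℝ h) y u (EuclideanSpace.single l.2 1) +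
          sg l.1 * fderiv ℝ (fderiv ℝ h) y u (Complex.I • EuclideanSpace.single l.2 1)) := by
    intro l u
    unfold op
    rw [fderiv_const_mul ((hv _).fun_add ((hv _).const_mul _)),
      fderiv_fun_add (hv _) ((hv _).const_mul _), fderiv_const_mul (hv _),
      fderiv_clm_apply hd (differentiableAt_const _), fderiv_clm_apply hd (differentiableAt_const _)]
    simp
    ring
  rw [op, key, key, op, key, key]
  rw [hs.eq (EuclideanSpace.single l.2 1) (EuclideanSpace.single m.2 1),
    hs.eq (EuclideanSpace.single l.2 1) (Complex.I • EuclideanSpace.single m.2 1),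
    hs.eq (Complex.I • EuclideanSpace.single l.2 1) (EuclideanSpace.single m.2 1),
    hs.eq (Complex.I • EuclideanSpace.single l.2 1) (Complex.I • EuclideanSpace.single m.2 1)]
  ring

def wt (l : Bool × Fin n) : ℤ := if l.1 then (n : ℤ) - (l.2 : ℕ) else 0

def wtW (T : List (Bool × Fin n)) : ℤ := (T.map wt).sum

def F (M : ℤ) (h : E n → ℂ) : Prop := ∀ T, wtW T < M → W T h 0 = 0

lemma wt_nonneg (l : Bool × Fin n) : 0 ≤ wt l := by
  have := l.2.2
  unfold wt; split_ifs <;> omega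

lemma F_op {M : ℤ} {h : E n → ℂ} (l) (hF : F M h) : F (M - wt l) (op l h) := by
  intro T hT
  refine hF (l :: T) ?_
  simp only [wtW, List.map_cons, List.sum_cons] at *
  linarith

lemma F_mono {M N : ℤ} {h : E n → ℂ} (hMN : M ≤ N) (hF : F N h) : F M h :=
  fun T hT => hF T (by linarith)

lemma F_cc (i : Fin n) {M : ℤ} {h : E n → ℂ} (hh : AnalyticAt ℝ h 0) (hF : F M h) :
    F (M + wt (true, i)) (fun y => cc i y * h y) := by
  intro T
  induction T generalizing M h with
  | nil => intro _; simp [W]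
  | cons l T ih =>
    intro hT
    simp only [wtW, List.map_cons, List.sum_cons] at hT
    simp only [W]
    rw [W_congr0 T (op_mul l (cc_an i 0) hh), op_cc]
    rw [W_add T (analyticAt_const.fun_mul hh) ((cc_an i 0).fun_mul (op_an l hh)), W_const_mul _ T hh,
      ih (op_an l hh) (F_op l hF) (by unfold wtW; linarith)]
    split_ifs with hl
    · subst hl
      rw [hF T (by unfold wtW; linarith)]; simp
    · simp

lemma F_add {M : ℤ} {h k : E n → ℂ} (hh : AnalyticAt ℝ h 0) (hk : AnalyticAt ℝ k 0)
    (h1 : F M h) (h2 : F M k) : F M (fun y => h y + k y) := by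
  intro T hT
  rw [W_add T hh hk, h1 T hT, h2 T hT, add_zero]

/-- conjugate polynomial -/
def cp (p : MvPolynomial (Fin n) ℂ) : E n → ℂ :=
  fun z => (starRingEnd ℂ) (MvPolynomial.eval (fun i => z i) p)

lemma cp_an (p : MvPolynomial (Fin n) ℂ) (x : E n) : AnalyticAt ℝ (cp p) x := by
  induction p using MvPolynomial.induction_on with
  | C a =>
    exact (analyticAt_const (v := (starRingEnd ℂ) a)).congr (.of_forall fun z => by simp [cp])
  | add p q hp hq =>
    refine (hp.fun_add hq).congr (.of_forall fun z => ?_)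
    simp [cp]
  | mul_X p i hp =>
    refine (hp.fun_mul (cc_an i x)).congr (.of_forall fun z => ?_)
    simp [cp, cc_apply]

lemma F_cp (p : MvPolynomial (Fin n) ℂ) {M : ℤ} {h : E n → ℂ} (hh : AnalyticAt ℝ h 0)
    (hF : F M h) : F M (fun y => cp p y * h y) := by
  induction p using MvPolynomial.induction_on with
  | C a =>
    intro T hT
    simp only [cp, MvPolynomial.eval_C]
    rw [W_const_mul _ T hh, hF T hT, mul_zero]
  | add p q hp hq =>
    have := F_add ((cp_an p 0).mul hh) ((cp_an q 0).mul hh) hp hq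
    convert this using 1
    ext z; simp [cp]; ring
  | mul_X p i hp =>
    have := F_cc i ((cp_an p 0).mul hh) hp
    refine F_mono (by linarith [wt_nonneg (true, i)]) (N := M + wt (true, i)) ?_
    convert this using 1
    ext z; simp [cp, cc_apply]; ring

lemma F_cp_span (j : Fin n) (p : MvPolynomial (Fin n) ℂ)
    (hp : p ∈ Ideal.span ((MvPolynomial.X : Fin n → MvPolynomial (Fin n) ℂ) '' {i | (i:ℕ) < j}))
    {M : ℤ} {h : E n → ℂ} (hh : AnalyticAt ℝ h 0)
    (hF : F M h) : F (M + wt (true, j) + 1) (fun y => cp p y * h y) := by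
  induction hp using Submodule.span_induction with
  | mem x hx =>
    obtain ⟨i, hi, rfl⟩ := hx
    have := F_cc i hh hF
    refine F_mono (N := M + wt (true, i)) ?_ ?_
    · simp only [Set.mem_ofPred_eq] at hi
      simp [wt]; omega
    · convert this using 1
      ext z; simp [cp, cc_apply]
  | zero => intro T hT; simp [cp, W_zero]
  | add x y _ _ hx hy =>
    have := F_add ((cp_an x 0).mul hh) ((cp_an y 0).mul hh) hx hy
    convert this using 1
    ext z; simp [cp]; ring
  | smul a x _ hx =>
    have := F_cp a ((cp_an x 0).mul hh) hx
    convert this using 1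
    ext z; simp [cp]; ring

lemma euler (i : Fin n) (T) : ∀ {f : E n → ℂ} (_ : AnalyticAt ℝ f 0),
    W T (fun y => cc i y * op (true, i) f y) 0 = (T.count (true, i) : ℂ) * W T f 0 := by
  induction T with
  | nil => intro f hf; simp [W]
  | cons l T ih =>
    intro f hf
    simp only [W]
    have h1 := op_an (true, i) hf
    have h2 : op l (fun y => cc i y * op (true, i) f y) =ᶠ[𝓝 0]
        fun y => (if l = (true, i) then 1 else 0) * op (true, i) f y +
          cc i y * op (true, i) (op l f) y := by
      filter_upwards [op_mul l (cc_an i 0) h1, op_comm l (true, i) hf] with y h3 h4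
      rw [h3, h4, op_cc]
    rw [W_congr0 T h2, W_add T (analyticAt_const.fun_mul h1)
      ((cc_an i 0).fun_mul (op_an _ (op_an l hf))), W_const_mul _ T h1, ih (op_an l hf),
      List.count_cons]
    by_cases hl : l = (true, i)
    · subst hl; simp; ring
    · simp [hl]

lemma main_vanish (lam : Fin n → ℂ)
    (hlam : ∀ j, 0 < (lam j).re)
    (g : Fin n → MvPolynomial (Fin n) ℂ)
    (hg : ∀ j : Fin n, g j ∈ Ideal.span ((MvPolynomial.X : Fin n → MvPolynomial (Fin n) ℂ) ''
      {i | (i:ℕ) < j}))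
    (f : E n → ℂ) (hf : AnalyticAt ℝ f 0)
    (hX : ∀ᶠ z in 𝓝 (0 : E n), ∑ j : Fin n,
      ((starRingEnd ℂ) (lam j) * (cc j z * op (true, j) f z) + cp (g j) z * op (true, j) f z) = 0)
    (N : ℕ) : ∀ T, 0 < wtW T → wtW T < N → W T f 0 = 0 := by
  induction N with
  | zero => intro T h1 h2; simp at h2; omega
  | succ N ih =>
    intro T h1 h2
    have a1 : ∀ j, AnalyticAt ℝ (op (true, j) f) 0 := fun j => op_an _ hf
    have a2 : ∀ j, AnalyticAt ℝ (fun z => cc j z * op (true, j) f z) 0 :=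
      fun j => (cc_an j 0).mul (a1 j)
    have a3 : ∀ j, AnalyticAt ℝ (fun z => cp (g j) z * op (true, j) f z) 0 :=
      fun j => (cp_an _ 0).mul (a1 j)
    have hpos : ∀ j : Fin n, 0 < wt (true, j) := fun j => by have := j.2; simp [wt]
    have hF : ∀ j : Fin n, F (N - wt (true, j)) (op (true, j) f) := by
      intro j S hS
      refine ih ((true, j) :: S) ?_ ?_
      · have : 0 ≤ wtW S := List.sum_nonneg (by
          intro x hx; obtain ⟨l, _, rfl⟩ := List.mem_map.mp hx; exact wt_nonneg l)
        have := hpos j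
        simp only [wtW, List.map_cons, List.sum_cons] at *; linarith
      · simp only [wtW, List.map_cons, List.sum_cons] at *; linarith
    have hG : ∀ j, W T (fun z => cp (g j) z * op (true, j) f z) 0 = 0 := fun j =>
      F_cp_span j (g j) (hg j) (a1 j) (hF j) T (by push_cast at h2; linarith)
    have h0 := W_congr0 (x := 0) T (h := fun z => ∑ j : Fin n,
      ((starRingEnd ℂ) (lam j) * (cc j z * op (true, j) f z) + cp (g j) z * op (true, j) f z))
      (k := fun _ => 0) hX
    rw [W_zero, W_sum _ _ (fun j => (analyticAt_const.fun_mul (a2 j)).fun_add (a3 j))] at h0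
    have h3 : ∀ j, W T (fun z => (starRingEnd ℂ) (lam j) * (cc j z * op (true, j) f z) +
        cp (g j) z * op (true, j) f z) 0 =
        (starRingEnd ℂ) (lam j) * (T.count (true, j) : ℂ) * W T f 0 := by
      intro j
      rw [W_add T (analyticAt_const.fun_mul (a2 j)) (a3 j), hG, W_const_mul _ T (a2 j), euler j T hf]
      ring
    simp only [h3] at h0
    rw [← Finset.sum_mul] at h0
    refine (mul_eq_zero.mp h0).resolve_left ?_
    intro h4
    have h5 := congrArg Complex.re h4
    simp only [Complex.re_sum, Complex.zero_re] at h5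
    have h6 : ∀ j, ((starRingEnd ℂ) (lam j) * (T.count (true, j) : ℂ)).re =
        (lam j).re * T.count (true, j) := by intro j; simp
    simp only [h6] at h5
    rw [Finset.sum_eq_zero_iff_of_nonneg (fun j _ => mul_nonneg (hlam j).le (by positivity))] at h5
    have h7 : ∀ l ∈ T, wt l = 0 := by
      rintro ⟨b, j⟩ hl
      cases b
      · simp [wt]
      · exfalso
        have := h5 j (Finset.mem_univ _)
        have h8 : 0 < T.count (true, j) := List.count_pos_iff.mpr hl
        have h9 := mul_pos (hlam j) (Nat.cast_pos (α := ℝ).mpr h8)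
        linarith
    have : wtW T = 0 := List.sum_eq_zero (by
      intro x hx; obtain ⟨l, hl, rfl⟩ := List.mem_map.mp hx; exact h7 l hl)
    omega

lemma fderiv_eq (h : E n → ℂ) (x v : E n) : fderiv ℝ h x v =
    ∑ j, (v j * op (false, j) h x + (starRingEnd ℂ) (v j) * op (true, j) h x) := by
  have hv : v = ∑ j, ((v j).re • (EuclideanSpace.single j (1:ℂ) : E n) +
      (v j).im • (Complex.I • EuclideanSpace.single j (1:ℂ) : E n)) := by
    ext i
    have : ∀ j : Fin n, ((v j).re : ℂ) * (Pi.single j (1:ℂ) : Fin n → ℂ) i +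
        ((v j).im : ℂ) * (Complex.I * (Pi.single j (1:ℂ) : Fin n → ℂ) i) =
        if i = j then v j else 0 := by
      intro j
      by_cases hij : i = j
      · subst hij; simp
      · simp [hij]
    simp [this]
  conv_lhs => rw [hv]
  rw [map_sum]
  refine Finset.sum_congr rfl fun j _ => ?_
  simp only [map_add, map_smul, op, sg]
  apply Complex.ext <;> simp <;> ring

lemma iter_zero (v : E n) (k : ℕ) : ∀ {h : E n → ℂ} (_ : AnalyticAt ℝ h 0)
    (_ : ∀ T, W T h 0 = 0), iteratedDeriv k (fun t : ℝ => h (t • v)) 0 = 0 := by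
  induction k with
  | zero => intro h _ h0; simpa [W] using h0 []
  | succ k ih =>
    intro h hh h0
    rw [iteratedDeriv_succ']
    have a1 : ∀ j, AnalyticAt ℝ (fun x => v j * op (false, j) h x +
        (starRingEnd ℂ) (v j) * op (true, j) h x) 0 := fun j =>
      (analyticAt_const.fun_mul (op_an _ hh)).fun_add (analyticAt_const.fun_mul (op_an _ hh))
    have hc : Tendsto (fun t : ℝ => t • v) (𝓝 0) (𝓝 (0 : E n)) := by
      have : Continuous (fun t : ℝ => t • v) := by fun_prop
      simpa using this.tendsto 0
    have e1 : deriv (fun t : ℝ => h (t • v)) =ᶠ[𝓝 0] fun t : ℝ =>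
        (fun x => ∑ j, (v j * op (false, j) h x + (starRingEnd ℂ) (v j) * op (true, j) h x))
          (t • v) := by
      filter_upwards [hc.eventually hh.eventually_analyticAt] with t ht
      have h1 : HasDerivAt (fun t : ℝ => t • v) v t := by
        simpa using (hasDerivAt_id t).smul_const v
      have := ht.differentiableAt.hasFDerivAt.comp_hasDerivAt t h1
      rw [← fderiv_eq]
      exact this.deriv
    rw [e1.iteratedDeriv_eq]
    refine ih (Finset.analyticAt_fun_sum _ fun j _ => a1 j) ?_
    intro T
    rw [W_sum _ _ a1]
    refine Finset.sum_eq_zero fun j _ => ?_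
    rw [W_add T (analyticAt_const.fun_mul (op_an _ hh)) (analyticAt_const.fun_mul (op_an _ hh)),
      W_const_mul _ T (op_an _ hh), W_const_mul _ T (op_an _ hh)]
    have h1 := h0 ((false, j) :: T)
    have h2 := h0 ((true, j) :: T)
    simp only [W] at h1 h2
    rw [h1, h2]; simp

lemma vanish {h : E n → ℂ} (hh : AnalyticOnNhd ℝ h (ball 0 1)) (h0 : ∀ T, W T h 0 = 0)
    (v : E n) (hv : v ∈ ball (0 : E n) 1) : h v = 0 := by
  let U : Set ℝ := (fun t : ℝ => t • v) ⁻¹' (ball 0 1)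
  have hU : Convex ℝ U :=
    (convex_ball (0 : E n) 1).is_linear_preimage (f := fun t : ℝ => t • v)
      ⟨fun a b => add_smul a b v, fun a b => by simp [mul_smul]⟩
  have a0 : AnalyticOnNhd ℝ (fun t : ℝ => h (t • v)) U := by
    intro t ht
    have h1 : AnalyticAt ℝ (fun t : ℝ => t • v) t := by fun_prop
    exact AnalyticAt.comp (f := fun t : ℝ => t • v) (hh _ ht) h1
  have z0 : (0:ℝ) ∈ U := by simp [U]
  have ev : (fun t : ℝ => h (t • v)) =ᶠ[𝓝 0] 0 := by
    have : analyticOrderAt (fun t : ℝ => h (t • v)) 0 = ⊤ := by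
      rw [ENat.eq_top_iff_forall_ge]
      intro m
      rw [natCast_le_analyticOrderAt_iff_iteratedDeriv_eq_zero (a0 0 z0)]
      intro i _
      exact iter_zero v i (hh 0 (by simp)) h0
    exact analyticOrderAt_eq_top.mp this
  have := a0.eqOn_zero_of_preconnected_of_eventuallyEq_zero hU.isPreconnected z0 ev
    (show (1:ℝ) ∈ U by simpa [U] using hv)
  simpa using this

lemma holo {f : E n → ℂ} {x : E n} (hf : DifferentiableAt ℝ f x)
    (h0 : ∀ j, op (true, j) f x = 0) : DifferentiableAt ℂ f x := by
  rw [differentiableAt_iff_restrictScalars ℝ hf]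
  refine ⟨∑ j, op (false, j) f x • (EuclideanSpace.proj j : E n →L[ℂ] ℂ), ?_⟩
  ext v
  rw [fderiv_eq]
  simp [h0, mul_comm]

end
end Forelli

/-- **Real-analytic version** (Theorem 3.3).  Let
`X = Σ_j (λ_j z_j + g_j(z_1,…,z_{j-1})) ∂/∂z_j` be a holomorphic vector field contracting
at the origin (`Re λ_j > 0`, `g_j` polynomials in the earlier variables with zero constant
term).  If `f` is real-analytic on the unit ball and satisfies `X̄ f = 0`, expressed via
the Wirtinger derivatives `(∂f/∂z̄_j)(p) = ½(Df(p)(e_j) + i·Df(p)(i·e_j))`, then `f` is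
holomorphic. -/
theorem forelli_real_analytic (n : ℕ) (lam : Fin n → ℂ)
    (hlam : ∀ j, 0 < (lam j).re)
    (g : Fin n → MvPolynomial (Fin n) ℂ)
    (hgvars : ∀ j : Fin n, ∀ i ∈ (g j).vars, (i : ℕ) < (j : ℕ))
    (hg0 : ∀ j, MvPolynomial.coeff 0 (g j) = 0)
    (f : EuclideanSpace ℂ (Fin n) → ℂ)
    (hf : AnalyticOnNhd ℝ f (ball (0 : EuclideanSpace ℂ (Fin n)) 1))
    (hX : ∀ z ∈ ball (0 : EuclideanSpace ℂ (Fin n)) 1,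
      ∑ j : Fin n, (starRingEnd ℂ) (lam j * z j + MvPolynomial.eval (fun i => z i) (g j)) *
        ((1 / 2 : ℂ) * (fderiv ℝ f z (EuclideanSpace.single j 1) +
          Complex.I * fderiv ℝ f z (Complex.I • EuclideanSpace.single j 1))) = 0) :
    DifferentiableOn ℂ f (ball (0 : EuclideanSpace ℂ (Fin n)) 1) := by
  have hg : ∀ j : Fin n, g j ∈ Ideal.span
      ((MvPolynomial.X : Fin n → MvPolynomial (Fin n) ℂ) '' {i | (i:ℕ) < j}) := by
    intro j
    rw [MvPolynomial.mem_ideal_span_X_image]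
    intro m hm
    have hm0 : m ≠ 0 := by
      rintro rfl
      exact (MvPolynomial.mem_support_iff.mp hm) (hg0 j)
    obtain ⟨i, hi⟩ := Finsupp.ne_iff.mp hm0
    refine ⟨i, hgvars j i ?_, hi⟩
    rw [MvPolynomial.mem_vars_iff_mem_support]
    exact ⟨m, hm, Finsupp.mem_support_iff.mpr hi⟩
  have hf0 := hf 0 (by simp)
  have key := Forelli.main_vanish lam hlam g hg f hf0 (by
    filter_upwards [ball_mem_nhds (0 : EuclideanSpace ℂ (Fin n)) one_pos] with z hz
    rw [← hX z hz]
    refine Finset.sum_congr rfl fun j _ => ?_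
    simp only [Forelli.cc_apply, Forelli.cp, Forelli.op, Forelli.sg, map_add, map_mul, if_true]
    ring)
  have hz : ∀ j, ∀ z ∈ ball (0 : EuclideanSpace ℂ (Fin n)) 1, Forelli.op (true, j) f z = 0 := by
    intro j
    refine Forelli.vanish (fun x hx => Forelli.op_an _ (hf x hx)) ?_
    intro T
    have h1 : 0 < Forelli.wtW ((true, j) :: T) := by
      have h2 : 0 ≤ Forelli.wtW T := List.sum_nonneg (by
          intro x hx; obtain ⟨l, _, rfl⟩ := List.mem_map.mp hx; exact Forelli.wt_nonneg l)
      have h3 : 0 < Forelli.wt (true, j) := by have := j.2; simp [Forelli.wt]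
      simp only [Forelli.wtW, List.map_cons, List.sum_cons] at *; linarith
    exact key ((Forelli.wtW ((true, j) :: T)).toNat + 1) ((true, j) :: T) h1 (by
      push_cast; rw [Int.toNat_of_nonneg h1.le]; linarith)
  intro x hx
  exact (Forelli.holo (hf x hx).differentiableAt fun j => hz j x hx).differentiableWithinAt
end

section
/- Let k be a positive integer and define F : ℂ² → ℂ by F(z₁,z₂) = (conj(z₂)/conj(z₁)) · z₁^{k+2} if z₁ ≠ 0 and F(z₁,z₂) = 0 if z₁ = 0. Then: (a) F is of class C^k on all of ℂ²; (b) for every v ∈ ℂ² the function ζ ↦ F(ζ·v) is holomorphic on all of ℂ; and (c) F is not holomorphic on any nonempty open subset of ℂ² (indeed F is not complex differentiable at any point with z₁ ≠ 0). -/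
/-- Forelli's example `F(z₁,z₂) = (z̄₂/z̄₁) z₁^{k+2}` for `z₁ ≠ 0`, `F = 0` for `z₁ = 0`. -/
noncomputable def forelliExample (k : ℕ) : ℂ × ℂ → ℂ := fun z =>
  if z.1 = 0 then 0
  else ((starRingEnd ℂ) z.2 / (starRingEnd ℂ) z.1) * z.1 ^ (k + 2)

open Complex Topology

lemma aux_norm (a b : ℕ) (h : b < a) (w : ℂ) :
    ‖w ^ a * ((starRingEnd ℂ w) ^ b)⁻¹‖ = ‖w‖ ^ (a - b) := by
  rw [norm_mul, norm_inv, norm_pow, norm_pow, RCLike.norm_conj]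
  by_cases hw : ‖w‖ = 0
  · rw [hw, zero_pow (show a ≠ 0 by omega), zero_pow (show a - b ≠ 0 by omega), zero_mul]
  · rw [pow_sub₀ _ hw h.le]

lemma aux_zero (a b : ℕ) (h : b + 1 < a) :
    HasFDerivAt (𝕜 := ℝ) (fun w : ℂ => w ^ a * ((starRingEnd ℂ w) ^ b)⁻¹) 0 0 := by
  apply Asymptotics.IsBigO.hasFDerivAt (n := a - b) _ (by omega)
  refine Asymptotics.IsBigO.of_bound 1 (Filter.Eventually.of_forall fun w => ?_)
  rw [aux_norm a b (by omega)]
  simp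

lemma aux_ne (a b : ℕ) (x : ℂ) (hx : x ≠ 0) :
    HasFDerivAt (𝕜 := ℝ) (fun w : ℂ => w ^ a * ((starRingEnd ℂ w) ^ b)⁻¹)
      ((x ^ (a - 1) * ((starRingEnd ℂ x) ^ b)⁻¹) • ((a : ℂ) • (1 : ℂ →L[ℝ] ℂ))
        + (x ^ a * ((starRingEnd ℂ x) ^ (b + 1))⁻¹) •
          ((-(b : ℂ)) • (conjCLE : ℂ →L[ℝ] ℂ))) x := by
  have hcx : starRingEnd ℂ x ≠ 0 := by simpa using hx
  have h1 := (hasDerivAt_pow a x).complexToReal_fderiv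
  have h2 := ((hasDerivAt_pow b (starRingEnd ℂ x)).inv (pow_ne_zero b hcx)).complexToReal_fderiv
  have h3 : HasFDerivAt (𝕜 := ℝ) (fun w : ℂ => starRingEnd ℂ w) (conjCLE : ℂ →L[ℝ] ℂ) x :=
    (conjCLE : ℂ →L[ℝ] ℂ).hasFDerivAt
  have h4 := h1.mul (HasFDerivAt.comp x h2 h3)
  refine h4.congr_fderiv ?_
  ext1 v
  simp
  rcases b with _ | b
  · simp; ring
  · simp; field_simp; ring

lemma aux_contDiff (n : ℕ) : ∀ a b : ℕ, b + n < a →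
    ContDiff ℝ (n : ℕ) (fun w : ℂ => w ^ a * ((starRingEnd ℂ w) ^ b)⁻¹) := by
  induction n with
  | zero =>
    intro a b h
    rw [Nat.cast_zero, contDiff_zero, continuous_iff_continuousAt]
    intro x
    by_cases hx : x = 0
    · subst hx
      have : (0 : ℂ) ^ a * ((starRingEnd ℂ 0) ^ b)⁻¹ = 0 := by
        rw [zero_pow (by omega), zero_mul]
      rw [ContinuousAt, this, tendsto_zero_iff_norm_tendsto_zero]
      simp_rw [aux_norm a b (by omega)]
      have h2 : Continuous fun w : ℂ => ‖w‖ ^ (a - b) := by fun_prop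
      have h3 := h2.tendsto 0
      rwa [norm_zero, zero_pow (by omega)] at h3
    · exact (aux_ne a b x hx).continuousAt
  | succ n ih =>
    intro a b h
    rw [Nat.cast_succ, contDiff_succ_iff_hasFDerivAt]
    refine ⟨fun x => (x ^ (a - 1) * ((starRingEnd ℂ x) ^ b)⁻¹) • ((a : ℂ) • (1 : ℂ →L[ℝ] ℂ))
        + (x ^ a * ((starRingEnd ℂ x) ^ (b + 1))⁻¹) •
          ((-(b : ℂ)) • (conjCLE : ℂ →L[ℝ] ℂ)), ?_, ?_⟩
    · exact ((ih (a - 1) b (by omega)).smul contDiff_const).add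
        ((ih a (b + 1) (by omega)).smul contDiff_const)
    · intro x
      by_cases hx : x = 0
      · subst hx
        refine (aux_zero a b (by omega)).congr_fderiv ?_
        have e1 : (0 : ℂ) ^ (a - 1) = 0 := zero_pow (by omega)
        have e2 : (0 : ℂ) ^ a = 0 := zero_pow (by omega)
        simp only [e1, e2, zero_mul]
        ext1 v
        simp
      · exact aux_ne a b x hx

lemma aux_conj (z : ℂ) : ¬ DifferentiableAt ℂ (fun w : ℂ => starRingEnd ℂ w) z := by
  intro h
  have h1 := h.hasDerivAt.complexToReal_fderiv
  have h3 : HasFDerivAt (𝕜 := ℝ) (fun w : ℂ => starRingEnd ℂ w) (conjCLE : ℂ →L[ℝ] ℂ) z :=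
    (conjCLE : ℂ →L[ℝ] ℂ).hasFDerivAt
  have h4 := h1.unique h3
  have e1 := DFunLike.congr_fun h4 1
  have e2 := DFunLike.congr_fun h4 I
  simp only [smul_apply, one_apply_eq_self, smul_eq_mul,
    ContinuousLinearEquiv.coe_coe, conjCLE_apply, map_one, conj_I, mul_one] at e1 e2
  rw [e1] at e2
  have := congrArg Complex.im e2
  norm_num at this

lemma aux_not (k : ℕ) (z : ℂ × ℂ) (hz : z.1 ≠ 0) :
    ¬ DifferentiableAt ℂ (forelliExample k) z := by
  intro h
  apply aux_conj z.2
  have h1 : DifferentiableAt ℂ (fun w : ℂ => (z.1, w)) z.2 := by fun_prop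
  have h2 : DifferentiableAt ℂ (fun w : ℂ => forelliExample k (z.1, w)) z.2 :=
    DifferentiableAt.comp (g := forelliExample k) z.2 h h1
  have h3 := h2.mul_const (starRingEnd ℂ z.1 / z.1 ^ (k + 2))
  have hc : starRingEnd ℂ z.1 ≠ 0 := by simpa using hz
  refine h3.congr_of_eventuallyEq (Filter.Eventually.of_forall fun w => ?_)
  simp only [forelliExample, if_neg hz]
  field_simp

/-- For a positive integer `k`, the function `F(z₁,z₂) = (z̄₂/z̄₁) z₁^{k+2}` (extended by
`0` on `z₁ = 0`) is (a) of class `C^k` on all of `ℂ²`, (b) holomorphic on all of `ℂ` along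
every radial complex line `ζ ↦ ζ·v`, and (c) not holomorphic on any nonempty open subset of
`ℂ²`; indeed it is not complex differentiable at any point with `z₁ ≠ 0`.  Hence the
`C^∞(0)` condition in Forelli's theorem cannot be relaxed to finite differentiability. -/
theorem forelli_finite_smoothness_counterexample (k : ℕ) (hk : 0 < k) :
    ContDiff ℝ (k : ℕ) (forelliExample k) ∧
    (∀ v : ℂ × ℂ, Differentiable ℂ (fun ζ : ℂ => forelliExample k (ζ • v))) ∧
    (∀ U : Set (ℂ × ℂ), IsOpen U → U.Nonempty →
      ¬ DifferentiableOn ℂ (forelliExample k) U) ∧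
    (∀ z : ℂ × ℂ, z.1 ≠ 0 → ¬ DifferentiableAt ℂ (forelliExample k) z) := by
  refine ⟨?_, ?_, ?_, aux_not k⟩
  · have h1 := (aux_contDiff k (k + 2) 1 (by omega)).comp (contDiff_fst (𝕜 := ℝ) (E := ℂ) (F := ℂ))
    have h2 : ContDiff ℝ (k : ℕ) (fun z : ℂ × ℂ => starRingEnd ℂ z.2) :=
      (conjCLE : ℂ →L[ℝ] ℂ).contDiff.comp contDiff_snd
    have h3 : forelliExample k = fun z : ℂ × ℂ => starRingEnd ℂ z.2 *
        ((fun w : ℂ => w ^ (k + 2) * ((starRingEnd ℂ w) ^ 1)⁻¹) ∘ Prod.fst) z := by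
      funext z
      by_cases hz : z.1 = 0
      · simp [forelliExample, hz]
      · simp [forelliExample, hz]
        ring
    rw [h3]
    exact h2.mul h1
  · intro v
    have : (fun ζ : ℂ => forelliExample k (ζ • v)) =
        fun ζ : ℂ => ζ ^ (k + 2) * forelliExample k v := by
      funext ζ
      by_cases hv : v.1 = 0
      · simp [forelliExample, hv]
      · by_cases hζ : ζ = 0
        · simp [forelliExample, hζ]
        · have h1 : starRingEnd ℂ v.1 ≠ 0 := by simpa using hv
          have h2 : starRingEnd ℂ ζ ≠ 0 := by simpa using hζ
          simp only [forelliExample, Prod.smul_fst, Prod.smul_snd, smul_eq_mul, mul_eq_zero, hv, hζ,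
            or_self, if_false, map_mul]
          rw [mul_pow]
          field_simp
    rw [this]
    fun_prop
  · rintro U hU ⟨z, hz⟩ h
    have hV : IsOpen ((fun t : ℂ => (t, z.2)) ⁻¹' U) := hU.preimage (by fun_prop)
    obtain ⟨t, ht, ht'⟩ := (dense_compl_singleton (0 : ℂ)).inter_open_nonempty _ hV ⟨z.1, hz⟩
    exact aux_not k (t, z.2) ht' (h.differentiableAt (hU.mem_nhds ht))
end
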